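/- Let X be a Banach space with the Daugavet property. For every sequence (x_i) in the unit sphere of X and every sequence (f_i) in the unit sphere of X* satisfying f_i(x_i) > 1 − 1/i for all i ∈ ℕ, there exists a sequence (g_i) in the unit sphere of X* such that g_i(x_i) > 1 − 1/i and ‖g_i − f_i‖ = 2 for every i ∈ ℕ. -/

import Mathlib

/-- A normed space `X` has the Daugavet property if `‖Id + T‖ = 1 + ‖T‖` for every
rank-one bounded linear operator `T : X → X`. -/
def DaugavetProperty (X : Type*) [SeminormedAddCommGroup X] [NormedSpace ℝ X] : Prop :=
  ∀ (f : X →L[ℝ] ℝ) (x : X),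
    ‖ContinuousLinearMap.id ℝ X + f.smulRight x‖ = 1 + ‖f.smulRight x‖

/-- One step of the construction. -/
theorem daug_step {X : Type*} [NormedAddCommGroup X] [NormedSpace ℝ X]
    (h : DaugavetProperty X) (f : X →L[ℝ] ℝ) (hf : ‖f‖ = 1) (u : X) (e : ℝ)
    (hu : 1 ≤ ‖u‖) (he : 0 < e) :
    ∃ y : X, ‖y‖ ≤ 1 ∧ f y ≤ -(1 - e) ∧ ‖u‖ + 1 - e ≤ ‖u + y‖ := by
  have h1 := h f (-u)
  rw [ContinuousLinearMap.norm_smulRight_apply, hf, norm_neg, one_mul] at h1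
  obtain ⟨y, hy1, hy2⟩ := ContinuousLinearMap.exists_lt_apply_of_lt_opNorm
    (ContinuousLinearMap.id ℝ X + f.smulRight (-u)) (r := 1 + ‖u‖ - e / 2) (by rw [h1]; linarith)
  have key : ∀ y : X, ‖y‖ < 1 → f y ≤ 0 → 1 + ‖u‖ - e / 2 < ‖y + f y • (-u)‖ →
      ∃ y : X, ‖y‖ ≤ 1 ∧ f y ≤ -(1 - e) ∧ ‖u‖ + 1 - e ≤ ‖u + y‖ := by
    intro y hy hfy hlt
    have hb : |f y| ≤ 1 := by
      have := f.le_opNorm y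
      rw [hf, one_mul, Real.norm_eq_abs] at this
      linarith
    rw [abs_of_nonpos hfy] at hb
    have h2 : ‖y + f y • (-u)‖ ≤ ‖y‖ + (-f y) * ‖u‖ := by
      refine (norm_add_le _ _).trans ?_
      rw [norm_smul, norm_neg, Real.norm_eq_abs, abs_of_nonpos hfy]
    have h3 : (1 + f y) * ‖u‖ < e / 2 := by nlinarith
    have h4 : (1 + f y) ≤ (1 + f y) * ‖u‖ := by nlinarith
    refine ⟨y, hy.le, by linarith, ?_⟩
    have h5 : y + f y • (-u) = (u + y) - (1 + f y) • u := by module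
    have h6 : ‖y + f y • (-u)‖ ≤ ‖u + y‖ + (1 + f y) * ‖u‖ := by
      rw [h5]
      refine (norm_sub_le _ _).trans ?_
      rw [norm_smul, Real.norm_eq_abs, abs_of_nonneg (by linarith)]
    linarith
  have hylt : 1 + ‖u‖ - e / 2 < ‖y + f y • (-u)‖ := by simpa using hy2
  rcases le_total (f y) 0 with hs | hs
  · exact key y hy1 hs hylt
  · refine key (-y) (by rwa [norm_neg]) (by simpa using hs) ?_
    have h8 : -y + f (-y) • (-u) = -(y + f y • (-u)) := by
      rw [map_neg]
      module
    rw [h8, norm_neg]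
    exact hylt

/-- The claim for a single pair. -/
theorem daug_single {X : Type*} [NormedAddCommGroup X] [NormedSpace ℝ X]
    (h : DaugavetProperty X) (f : X →L[ℝ] ℝ) (hf : ‖f‖ = 1) (x : X) (hx : ‖x‖ = 1)
    (d : ℝ) (hd : 0 < d) (hd1 : d ≤ 1) :
    ∃ g : X →L[ℝ] ℝ, ‖g‖ = 1 ∧ 1 - d ≤ g x ∧ ‖g - f‖ = 2 := by
  have H : ∀ (u : X) (e : ℝ), ∃ y : X, 1 ≤ ‖u‖ → 0 < e →
      ‖y‖ ≤ 1 ∧ f y ≤ -(1 - e) ∧ ‖u‖ + 1 - e ≤ ‖u + y‖ := by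
    intro u e
    by_cases hh : 1 ≤ ‖u‖ ∧ 0 < e
    · obtain ⟨y, hy⟩ := daug_step h f hf u e hh.1 hh.2
      exact ⟨y, fun _ _ => hy⟩
    · exact ⟨0, fun a b => absurd ⟨a, b⟩ hh⟩
  choose Y hY using H
  let D : ℕ → ℝ := fun n => d * (1 / 2) ^ n
  have hDpos : ∀ n, 0 < D n := fun n => by positivity
  have hDs : ∀ n, D (n + 1) = D n / 2 := fun n => by simp only [D, pow_succ]; ring
  have hD1 : ∀ n, D n ≤ 1 := by
    intro n
    induction n with
    | zero => simpa [D] using hd1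
    | succ k ih => rw [hDs]; linarith [hDpos k]
  have hDt : Filter.Tendsto D Filter.atTop (nhds 0) := by
    have := (tendsto_pow_atTop_nhds_zero_of_lt_one (r := (1 / 2 : ℝ)) (by norm_num)
      (by norm_num)).const_mul d
    simpa [D] using this
  let U : ℕ → X := fun n => Nat.rec x (fun n u => u + Y u (D n / 2)) n
  have hU0 : U 0 = x := rfl
  have hUs : ∀ n, U (n + 1) = U n + Y (U n) (D n / 2) := fun n => rfl
  have hU1 : ∀ n, 1 ≤ ‖U n‖ := by
    intro n
    induction n with
    | zero => rw [hU0, hx]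
    | succ k ih =>
      rw [hUs]
      have := (hY (U k) (D k / 2) ih (by linarith [hDpos k])).2.2
      linarith [hD1 k, hDpos k]
  have hYn := fun n => hY (U n) (D n / 2) (hU1 n) (by linarith [hDpos n])
  let K : ℕ → Set (WeakDual ℝ X) := fun n =>
    (WeakDual.toStrongDual ⁻¹' Metric.closedBall (0 : StrongDual ℝ X) 1) ∩
      {g | ‖U n‖ - D n ≤ g (U n)}
  have hball : ∀ g : WeakDual ℝ X,
      g ∈ (WeakDual.toStrongDual ⁻¹' Metric.closedBall (0 : StrongDual ℝ X) 1) →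
      ∀ z, g z ≤ ‖z‖ := by
    intro g hg z
    have h1 : ‖WeakDual.toStrongDual g‖ ≤ 1 := by simpa using hg
    have h2 := (WeakDual.toStrongDual g).le_of_opNorm_le h1 z
    rw [one_mul] at h2
    exact (le_abs_self _).trans h2
  have hclosed : ∀ n, IsClosed {g : WeakDual ℝ X | ‖U n‖ - D n ≤ g (U n)} := fun n =>
    isClosed_le continuous_const (WeakDual.eval_continuous (U n))
  have hne : (⋂ n, K n).Nonempty := by
    apply IsCompact.nonempty_iInter_of_sequence_nonempty_isCompact_isClosed
    · rintro n g ⟨hg1, hg2⟩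
      refine ⟨hg1, ?_⟩
      have hgtwo : ‖U (n + 1)‖ - D (n + 1) ≤ g (U (n + 1)) := hg2
      change ‖U n‖ - D n ≤ g (U n)
      obtain ⟨a, b, c⟩ := hYn n
      have h3 := hball g hg1 (Y (U n) (D n / 2))
      have h4 : g (U (n + 1)) = g (U n) + g (Y (U n) (D n / 2)) := by rw [hUs, map_add]
      rw [← hUs] at c
      rw [hDs] at hgtwo
      linarith
    · intro n
      obtain ⟨g, hg, hgeq⟩ := exists_dual_vector'' ℝ (U n)
      refine ⟨StrongDual.toWeakDual g, ?_, ?_⟩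
      · simpa using hg
      · change ‖U n‖ - D n ≤ g (U n)
        rw [hgeq]
        simpa using (hDpos n).le
    · exact (WeakDual.isCompact_closedBall (0 : StrongDual ℝ X) 1).inter_right (hclosed 0)
    · intro n
      exact (WeakDual.isClosed_closedBall (0 : StrongDual ℝ X) 1).inter (hclosed n)
  obtain ⟨w, hw⟩ := hne
  rw [Set.mem_iInter] at hw
  let g : X →L[ℝ] ℝ := WeakDual.toStrongDual w
  have hg1 : ‖g‖ ≤ 1 := by simpa using (hw 0).1
  have hgz : ∀ z, g z ≤ ‖z‖ := hball w (hw 0).1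
  have hgU : ∀ n, ‖U n‖ - D n ≤ g (U n) := fun n => (hw n).2
  have hlow : ∀ n, 2 - 2 * D n ≤ ‖g - f‖ := by
    intro n
    obtain ⟨a, b, c⟩ := hYn n
    have h1 := hgU (n + 1)
    have h2 := hgz (U n)
    have h4 : g (U (n + 1)) = g (U n) + g (Y (U n) (D n / 2)) := by rw [hUs, map_add]
    rw [← hUs] at c
    rw [hDs] at h1
    have h5 := (g - f).le_of_opNorm_le_of_le le_rfl a
    have h6 : (g - f) (Y (U n) (D n / 2)) = g (Y (U n) (D n / 2)) - f (Y (U n) (D n / 2)) := rfl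
    have h7 := le_abs_self ((g - f) (Y (U n) (D n / 2)))
    rw [Real.norm_eq_abs] at h5
    linarith [hDpos n]
  have hge : 2 ≤ ‖g - f‖ := by
    have ht : Filter.Tendsto (fun n => 2 - 2 * D n) Filter.atTop (nhds 2) := by
      simpa using (hDt.const_mul 2).const_sub 2
    exact le_of_tendsto' ht hlow
  have htri := norm_sub_le g f
  refine ⟨g, by linarith, ?_, by linarith⟩
  have := hgU 0
  rw [hU0, hx] at this
  simpa [D] using this

/-- In a Banach space with the Daugavet property, for every sequence `(xᵢ)` in the unit
sphere and every sequence `(fᵢ)` of norm-one functionals with `fᵢ(xᵢ) > 1 - 1/i`,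
there is a sequence `(gᵢ)` of norm-one functionals with `gᵢ(xᵢ) > 1 - 1/i` and
`‖gᵢ - fᵢ‖ = 2` for every `i ≥ 1`. -/
theorem daugavet_almost_norming_far_functionals
    (X : Type*) [NormedAddCommGroup X] [NormedSpace ℝ X] [CompleteSpace X]
    (h : DaugavetProperty X)
    (x : ℕ → X) (f : ℕ → (X →L[ℝ] ℝ))
    (hx : ∀ i : ℕ, 1 ≤ i → ‖x i‖ = 1)
    (hf : ∀ i : ℕ, 1 ≤ i → ‖f i‖ = 1)
    (hfx : ∀ i : ℕ, 1 ≤ i → f i (x i) > 1 - 1 / (i : ℝ)) :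
    ∃ g : ℕ → (X →L[ℝ] ℝ), ∀ i : ℕ, 1 ≤ i →
      ‖g i‖ = 1 ∧ g i (x i) > 1 - 1 / (i : ℝ) ∧ ‖g i - f i‖ = 2 := by
  have H : ∀ i : ℕ, ∃ g : X →L[ℝ] ℝ, 1 ≤ i →
      ‖g‖ = 1 ∧ g (x i) > 1 - 1 / (i : ℝ) ∧ ‖g - f i‖ = 2 := by
    intro i
    by_cases hi : 1 ≤ i
    · have hireal : (1 : ℝ) ≤ i := by exact_mod_cast hi
      have hpos : (0 : ℝ) < 1 / (i : ℝ) := by positivity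
      have hle : 1 / (i : ℝ) ≤ 1 := by
        rw [div_le_one (by linarith)]
        exact hireal
      obtain ⟨g, h1, h2, h3⟩ := daug_single h (f i) (hf i hi) (x i) (hx i hi)
        (1 / (i : ℝ) / 2) (by linarith) (by linarith)
      exact ⟨g, fun _ => ⟨h1, by linarith, h3⟩⟩
    · exact ⟨0, fun hh => absurd hh hi⟩
  choose g hg using H
  exact ⟨g, hg⟩
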